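/- Let f : ℕ → (0,∞) be non-decreasing, and suppose there exists K > 0 such that f(x+y) ≤ K·f(x)·f(y) for all positive integers x, y. Let an irreducible recurrent discrete-time Markov chain on a finite or countable state space be given, and let i, j be states with E f(T_ij) < ∞ and E f(T_ji) < ∞. Then E f(T_ii) < ∞; in fact E f(T_ii) ≤ K · E f(T_ij) · E f(T_ji). -/

import Mathlib

open Filter
open scoped ENNReal

namespace MCPaper

variable {E : Type*}

open Classical in
/-- `hitAvoid P t a n x` is the probability that the chain with transition matrix `P`,
started at `x`, is at `t` at time `n` while avoiding both `t` and `a` at times `1,…,n-1`.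
For `t = a` this is the distribution of the first hitting time of `t`. -/
noncomputable def hitAvoid (P : E → E → ℝ≥0∞) (t a : E) : ℕ → E → ℝ≥0∞
  | 0, _ => 0
  | 1, x => P x t
  | n + 2, x => ∑' k : E, if k = t ∨ k = a then 0 else P x k * hitAvoid P t a (n + 1) k

/-- `firstHit P i j n = P_i(T_ij = n)`, the probability that the first hitting time of `j`
(first return time if `i = j`) starting from `i` equals `n`. -/
noncomputable def firstHit (P : E → E → ℝ≥0∞) (i j : E) (n : ℕ) : ℝ≥0∞ :=
  hitAvoid P j j n i

/-- `P` is a stochastic matrix. -/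
def IsStochastic (P : E → E → ℝ≥0∞) : Prop := ∀ i, ∑' j : E, P i j = 1

/-- irreducibility: any state can be reached from any other state. -/
def IsIrreducible (P : E → E → ℝ≥0∞) : Prop := ∀ i j : E, ∃ n : ℕ, 0 < firstHit P i j n

/-- recurrence: `P_i(T_ii < ∞) = 1` for every state `i`. -/
def IsRecurrent (P : E → E → ℝ≥0∞) : Prop := ∀ i : E, ∑' n : ℕ, firstHit P i i n = 1

/-- the generalized moment `E f(T_ij)` of the first hitting time of `j` from `i`. -/
noncomputable def momGen (f : ℕ → ℝ) (P : E → E → ℝ≥0∞) (i j : E) : ℝ≥0∞ :=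
  ∑' n : ℕ, ENNReal.ofReal (f n) * firstHit P i j n

/-!
Follow the chain from an arbitrary state `x` and compare hitting `i` at the first opportunity with
the detour of first hitting `j` and then, from `j`, hitting `i`. Conditioning on the first step
shows `E φ(T_xi) ≤ E φ(T_xj + T'_ji)` for every monotone `φ`, by induction on a time horizon which
truncates the left-hand side. The only case with content is a first step to `i`: then the left-hand
side is `φ 1`, and the right-hand side is at least `φ 1` because the detour from `i` is almost
surely finite. At `x = i`, submultiplicativity splits the right-hand side into a product.

Almost sure finiteness of `T_ij` in an irreducible recurrent chain is a closure argument: the states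
from which `j` is hit almost surely include `j` and are closed under transitions.
-/

lemma indicator_Iio_succ_comp_succ {M : Type*} [Zero M] (n : ℕ) (w : ℕ → M) :
    (fun m => (Set.Iio (n + 1)).indicator w (m + 1)) =
      (Set.Iio n).indicator fun m => w (m + 1) := by
  ext m
  simp only [Set.indicator_apply, Set.mem_Iio, Nat.add_lt_add_iff_right]

lemma eq_one_of_tsum_mul_eq_one {ι : Type*} {p v : ι → ℝ≥0∞} (hp : ∑' k, p k = 1)
    (hv : ∀ k, v k ≤ 1) (hpv : ∑' k, p k * v k = 1) {k : ι} (hk : p k ≠ 0) : v k = 1 := by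
  by_contra hne
  have hpk : p k ≠ ⊤ := ENNReal.ne_top_of_tsum_ne_top (hp ▸ ENNReal.one_ne_top) k
  have hlt : ∑' l, p l * v l < ∑' l, p l :=
    ENNReal.tsum_lt_tsum (hpv ▸ ENNReal.one_ne_top) (fun l => mul_le_of_le_one_right' (hv l))
      ((ENNReal.mul_lt_mul_right hk hpk ((hv k).lt_of_ne hne)).trans_eq (mul_one _))
  exact hlt.ne (hpv.trans hp.symm)

section FirstHit

variable (P : E → E → ℝ≥0∞) (i j : E)

lemma firstHit_zero : firstHit P i j 0 = 0 := rfl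

lemma firstHit_one : firstHit P i j 1 = P i j := rfl

open Classical in
lemma firstHit_add_two (n : ℕ) :
    firstHit P i j (n + 2) = ∑' k, if k = j then 0 else P i k * firstHit P k j (n + 1) := by
  simp only [firstHit, hitAvoid, or_self]

variable {P i j}

lemma of_firstHit_ne_zero {C : E → Prop} (hC : ∀ x y, C x → P x y ≠ 0 → C y) {n : ℕ}
    (hi : C i) (hn : firstHit P i j n ≠ 0) : C j := by
  classical
  induction n generalizing i with
  | zero => exact absurd (firstHit_zero P i j) hn
  | succ n ih =>
    cases n with
    | zero => exact hC i j hi hn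
    | succ n =>
      rw [firstHit_add_two] at hn
      obtain ⟨k, hk⟩ := not_forall.1 (mt ENNReal.tsum_eq_zero.2 hn)
      obtain ⟨-, hk⟩ := ite_ne_left_iff.1 hk
      exact ih (hC i k hi (left_ne_zero_of_mul hk.symm)) (right_ne_zero_of_mul hk.symm)

end FirstHit

section HitExp

/-- The expectation `E[w(T_ij); T_ij < ∞]` of an extended nonnegative function of the first hitting
time of `j` from `i`. It extends `momGen` to the weights that appear after conditioning on the first
step and after truncation. -/
noncomputable def hitExp (w : ℕ → ℝ≥0∞) (P : E → E → ℝ≥0∞) (i j : E) : ℝ≥0∞ :=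
  ∑' n, w n * firstHit P i j n

/-- The probability `P_i(T_ij < ∞)` of ever hitting `j` from `i` at a positive time. -/
noncomputable def hitProb (P : E → E → ℝ≥0∞) (i j : E) : ℝ≥0∞ :=
  ∑' n, firstHit P i j n

variable {P : E → E → ℝ≥0∞} {i j : E} {v w : ℕ → ℝ≥0∞} {c : ℝ≥0∞}

lemma hitExp_one : hitExp (fun _ => 1) P i j = hitProb P i j := by
  simp only [hitExp, hitProb, one_mul]

lemma hitExp_const_mul : hitExp (fun n => c * w n) P i j = c * hitExp w P i j := by
  simp only [hitExp, mul_assoc, ENNReal.tsum_mul_left]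

lemma hitExp_mono (h : ∀ n, 0 < n → v n ≤ w n) : hitExp v P i j ≤ hitExp w P i j := by
  refine ENNReal.tsum_le_tsum fun n => ?_
  rcases n.eq_zero_or_pos with rfl | hn
  · simp only [firstHit_zero, mul_zero, le_refl]
  · exact mul_le_mul_left (h n hn) _

lemma le_hitExp_of_hitProb_eq_one (hij : hitProb P i j = 1) (h : ∀ n, 0 < n → c ≤ w n) :
    c ≤ hitExp w P i j :=
  calc c = hitExp (fun _ => c * 1) P i j := by rw [hitExp_const_mul, hitExp_one, hij, mul_one]
    _ ≤ hitExp w P i j := hitExp_mono fun n hn => (mul_one c).trans_le (h n hn)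

lemma hitExp_le_of_forall_indicator_Iio
    (h : ∀ n, hitExp ((Set.Iio n).indicator w) P i j ≤ c) : hitExp w P i j ≤ c := by
  refine ENNReal.tsum_le_of_sum_range_le fun n => le_trans ?_ (h n)
  calc ∑ m ∈ Finset.range n, w m * firstHit P i j m
      = ∑ m ∈ Finset.range n, (Set.Iio n).indicator w m * firstHit P i j m :=
        Finset.sum_congr rfl fun m hm => by
          rw [Set.indicator_of_mem (Set.mem_Iio.2 (Finset.mem_range.1 hm))]
    _ ≤ hitExp ((Set.Iio n).indicator w) P i j := ENNReal.sum_le_tsum _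

lemma hitExp_eq_tsum_succ : hitExp w P i j = ∑' n, w (n + 1) * firstHit P i j (n + 1) := by
  rw [hitExp, tsum_eq_zero_add' ENNReal.summable, firstHit_zero, mul_zero, zero_add]

open Classical in
lemma hitExp_first_step (w : ℕ → ℝ≥0∞) (P : E → E → ℝ≥0∞) (i j : E) :
    hitExp w P i j =
      ∑' k, P i k * if k = j then w 1 else hitExp (fun n => w (n + 1)) P k j := by
  have hlater : ∑' n, w (n + 2) * firstHit P i j (n + 2) =
      ∑' k, if k = j then 0 else P i k * hitExp (fun n => w (n + 1)) P k j := by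
    simp only [firstHit_add_two, hitExp_eq_tsum_succ, ← ENNReal.tsum_mul_left]
    rw [ENNReal.tsum_comm]
    refine tsum_congr fun k => ?_
    split_ifs
    · simp only [mul_zero, tsum_zero]
    · exact tsum_congr fun n => mul_left_comm _ _ _
  rw [hitExp_eq_tsum_succ, tsum_eq_zero_add' ENNReal.summable, hlater, firstHit_one,
    ENNReal.tsum_eq_add_tsum_ite (f := fun k => P i k * ite _ _ _) j, if_pos rfl, mul_comm (P i j)]
  congr 1
  exact tsum_congr fun k => by split_ifs <;> rfl

end HitExp

section Recurrence

variable {P : E → E → ℝ≥0∞} {j x y : E}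

lemma hitProb_le_one (hP : IsStochastic P) (i j : E) : hitProb P i j ≤ 1 := by
  classical
  rw [← hitExp_one]
  refine hitExp_le_of_forall_indicator_Iio fun n => ?_
  induction n generalizing i with
  | zero => simp [hitExp]
  | succ n ih =>
    rw [hitExp_first_step, indicator_Iio_succ_comp_succ]
    refine (ENNReal.tsum_le_tsum fun k => mul_le_of_le_one_right' ?_).trans_eq (hP i)
    split_ifs
    · exact Set.indicator_le_self _ _ 1
    · exact ih k

lemma hitProb_eq_one_of_step (hP : IsStochastic P) (hj : hitProb P j j = 1)
    (hx : hitProb P x j = 1) (hxy : P x y ≠ 0) : hitProb P y j = 1 := by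
  classical
  refine eq_one_of_tsum_mul_eq_one (hP x) (hitProb_le_one hP · j) ?_ hxy
  rw [← hitExp_one, hitExp_first_step] at hx
  rw [← hx]
  refine tsum_congr fun k => ?_
  split_ifs with hk
  · rw [hk, hj]
  · rw [hitExp_one]

lemma hitProb_eq_one (hP : IsStochastic P) (hirr : IsIrreducible P) (hrec : IsRecurrent P)
    (i j : E) : hitProb P i j = 1 := by
  obtain ⟨n, hn⟩ := hirr j i
  exact of_firstHit_ne_zero (C := fun x => hitProb P x j = 1)
    (fun _ _ => hitProb_eq_one_of_step hP (hrec j)) (hrec j) hn.ne'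

end Recurrence

section Detour

variable {P : E → E → ℝ≥0∞} {i j : E} {φ : ℕ → ℝ≥0∞}

/-- With `T'_ji` an independent copy of the hitting time of `i` from `j`, the right-hand side is
`E φ(T_xj + T'_ji)`. -/
lemma hitExp_le_hitExp_hitExp_add (hφ : Monotone φ) (hij : hitProb P i j = 1)
    (hji : hitProb P j i = 1) (x : E) :
    hitExp φ P x i ≤ hitExp (fun m => hitExp (fun l => φ (m + l)) P j i) P x j := by
  classical
  refine hitExp_le_of_forall_indicator_Iio fun n => ?_
  induction n generalizing φ x with
  | zero => simp [hitExp]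
  | succ n ih =>
    have hsucc : Monotone fun m => φ (m + 1) := fun _ _ h => hφ (Nat.succ_le_succ h)
    have hone_le : ∀ m, φ 1 ≤ hitExp (fun l => φ (m + 1 + l)) P j i := fun m =>
      le_hitExp_of_hitProb_eq_one hji fun l _ => hφ (by omega)
    rw [hitExp_first_step, hitExp_first_step, indicator_Iio_succ_comp_succ]
    refine ENNReal.tsum_le_tsum fun k => mul_le_mul_right ?_ _
    by_cases hki : k = i
    · rw [if_pos hki]
      refine (Set.indicator_le_self _ φ 1).trans ?_
      split_ifs
      · exact hone_le 0
      · exact le_hitExp_of_hitProb_eq_one (hki ▸ hij) fun m _ => hone_le m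
    · rw [if_neg hki]
      split_ifs with hkj
      · rw [hkj]
        refine hitExp_mono fun l _ => ?_
        rw [Nat.add_comm 1 l]
        exact Set.indicator_le_self _ _ l
      · simpa only [Nat.add_right_comm] using ih hsucc k

lemma hitExp_hitExp_add_le {K : ℝ≥0∞}
    (hsub : ∀ m l, 0 < m → 0 < l → φ (m + l) ≤ K * φ m * φ l) (x y z : E) :
    hitExp (fun m => hitExp (fun l => φ (m + l)) P y z) P x y ≤
      K * hitExp φ P x y * hitExp φ P y z := by
  calc hitExp (fun m => hitExp (fun l => φ (m + l)) P y z) P x y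
      ≤ hitExp (fun m => hitExp (fun l => K * φ m * φ l) P y z) P x y :=
        hitExp_mono fun m hm => hitExp_mono fun l hl => hsub m l hm hl
    _ = hitExp (fun m => K * hitExp φ P y z * φ m) P x y := by
        simp only [hitExp_const_mul, mul_right_comm K]
    _ = K * hitExp φ P x y * hitExp φ P y z := by rw [hitExp_const_mul, mul_right_comm]

end Detour

theorem stmt_9_general {f : ℕ → ℝ} (hf : ∀ n, 0 ≤ f n) (hmono : Monotone f) {K : ℝ} (hK : 0 ≤ K)
    (hsub : ∀ x y : ℕ, 0 < x → 0 < y → f (x + y) ≤ K * f x * f y) {P : E → E → ℝ≥0∞} {i j : E}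
    (hij : hitProb P i j = 1) (hji : hitProb P j i = 1) :
    momGen f P i i ≤ ENNReal.ofReal K * momGen f P i j * momGen f P j i := by
  have hdetour := hitExp_le_hitExp_hitExp_add (ENNReal.ofReal_mono.comp hmono) hij hji i
  refine hdetour.trans (hitExp_hitExp_add_le (fun m l hm hl => ?_) i j i)
  simp only [Function.comp_apply]
  rw [← ENNReal.ofReal_mul hK, ← ENNReal.ofReal_mul (mul_nonneg hK (hf m))]
  exact ENNReal.ofReal_le_ofReal (hsub m l hm hl)

theorem stmt_9 (f : ℕ → ℝ) (hpos : ∀ n, 0 < f n) (hmono : Monotone f)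
    (K : ℝ) (hK : 0 < K)
    (hsub : ∀ x y : ℕ, 0 < x → 0 < y → f (x + y) ≤ K * f x * f y)
    (S : Type*) [Countable S] (P : S → S → ℝ≥0∞)
    (hP : IsStochastic P) (hirr : IsIrreducible P) (hrec : IsRecurrent P)
    (i j : S) (hij : momGen f P i j < ⊤) (hji : momGen f P j i < ⊤) :
    momGen f P i i < ⊤ ∧
      momGen f P i i ≤ ENNReal.ofReal K * momGen f P i j * momGen f P j i := by
  have hle := stmt_9_general (fun n => (hpos n).le) hmono hK.le hsub
    (hitProb_eq_one hP hirr hrec i j) (hitProb_eq_one hP hirr hrec j i)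
  exact ⟨hle.trans_lt (ENNReal.mul_lt_top (ENNReal.mul_lt_top ENNReal.ofReal_lt_top hij) hji), hle⟩

end MCPaper
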